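/- Let k and m be positive integers with m ≤ k, m even, and let A be an intersecting collection of k-multisets on {1,…,m}. Then A contains at most half of the k-multisets in M_{(m/2)}, i.e., |A ∩ M_{(m/2)}| ≤ (1/2)·|M_{(m/2)}| = (1/2)·C(m, m/2)·C(k−1, k−m/2). -/

import Mathlib

open Finset in
/-- The number of `n`-multisets with elements in `S`. -/
theorem Finset.card_sym_eq_multichoose {α : Type*} [DecidableEq α] (S : Finset α) (n : ℕ) :
    (S.sym n).card = S.card.multichoose n := by
  have h := sym_map (n := n) (Function.Embedding.subtype (· ∈ S)) univ
  rw [univ_eq_attach, attach_map_val] at h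
  rw [h, card_map, ← univ_eq_attach, sym_univ, card_univ, Sym.card_sym_eq_multichoose,
    Fintype.card_coe]

open Finset in
/-- The number of `k`-multisets with support exactly `S`: remove one copy of each element of `S`. -/
theorem Sym.card_filter_toFinset_eq {α : Type*} [Fintype α] [DecidableEq α] (k : ℕ) (S : Finset α)
    (hSk : S.card ≤ k) :
    (univ.filter fun s : Sym α k => (s : Multiset α).toFinset = S).card
      = (k - 1).choose (k - S.card) := by
  have hcard : (S.sym (k - S.card)).card = (k - 1).choose (k - S.card) := by
    rw [Finset.card_sym_eq_multichoose, Nat.multichoose_eq, Nat.add_sub_cancel' hSk]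
  rw [← hcard]
  symm
  refine card_bij
    (fun t _ => Sym.mk ((t : Multiset α) + S.val) (by
      rw [Multiset.card_add, Sym.card_coe, card_val, Nat.sub_add_cancel hSk])) ?_ ?_ ?_
  · intro t ht
    rw [mem_sym_iff] at ht
    refine (mem_filter_univ _).2 ?_
    ext a
    simpa using ht a
  · intro t _ u _ h
    exact Sym.coe_injective (add_right_cancel (congrArg Subtype.val h))
  · intro s hs
    rw [mem_filter_univ] at hs
    have hle : S.val ≤ (s : Multiset α) := by
      rw [← hs, Multiset.toFinset_val]
      exact Multiset.dedup_le _
    refine ⟨Sym.mk ((s : Multiset α) - S.val) (by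
      rw [Multiset.card_sub hle, Sym.card_coe, card_val]), ?_, ?_⟩
    · refine mem_sym_iff.2 fun a ha => ?_
      rw [← hs, Multiset.mem_toFinset]
      exact Multiset.mem_of_le (Multiset.sub_le_self _ _) ha
    · exact Sym.coe_injective (Multiset.sub_add_cancel hle)

open Finset in
/-- An intersecting family of half-sized subsets contains at most half of them, since it never
contains both a set and its complement. -/
theorem Finset.two_mul_card_le_choose_of_intersecting {α : Type*} [Fintype α] [DecidableEq α]
    {n : ℕ} (hn : Fintype.card α = n + n) (F : Finset (Finset α))
    (hF : ∀ S ∈ F, S.card = n) (hint : ∀ S ∈ F, ∀ T ∈ F, (S ∩ T).Nonempty) :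
    2 * F.card ≤ (Fintype.card α).choose n := by
  have hdisj : Disjoint F (F.image compl) := by
    rw [disjoint_left]
    intro S hS hS'
    obtain ⟨T, hT, rfl⟩ := mem_image.1 hS'
    simpa using hint _ hT _ hS
  calc 2 * F.card = (F ∪ F.image compl).card := by
        rw [card_union_of_disjoint hdisj, card_image_of_injective _ compl_injective, two_mul]
    _ ≤ (powersetCard n (univ : Finset α)).card := by
        refine card_le_card (union_subset (fun S hS => ?_) (fun S hS => ?_))
        · simpa using hF S hS
        · obtain ⟨T, hT, rfl⟩ := mem_image.1 hS
          simp [card_compl, hF T hT, hn]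
    _ = (Fintype.card α).choose n := by rw [card_powersetCard, card_univ]

/-- For `m ≤ k` with `m` even, an intersecting collection `A` of `k`-multisets on
`{1,…,m}` contains at most half of the multisets in `M_{(m/2)}`:
`|A ∩ M_{(m/2)}| ≤ (1/2)·|M_{(m/2)}| = (1/2)·C(m, m/2)·C(k-1, k-m/2)`
(stated multiplied through by 2). -/
theorem stmt_19 (k m : ℕ) (hk : 0 < k) (hm : 0 < m) (hmk : m ≤ k) (heven : Even m)
    (A : Finset (Sym (Fin m) k))
    (hint : ∀ s ∈ A, ∀ t ∈ A, ∃ x : Fin m, x ∈ s ∧ x ∈ t) :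
    2 * (A ∩ Finset.univ.filter
        (fun s : Sym (Fin m) k => (s : Multiset (Fin m)).toFinset.card = m / 2)).card
      ≤ (Finset.univ.filter
        (fun s : Sym (Fin m) k => (s : Multiset (Fin m)).toFinset.card = m / 2)).card ∧
    (Finset.univ.filter
        (fun s : Sym (Fin m) k => (s : Multiset (Fin m)).toFinset.card = m / 2)).card
      = m.choose (m / 2) * (k - 1).choose (k - m / 2) := by
  have hhalf : m = m / 2 + m / 2 := by obtain ⟨r, rfl⟩ := heven; omega
  have hfib : ∀ S : Finset (Fin m), S.card = m / 2 →
      (Finset.univ.filter fun s : Sym (Fin m) k => (s : Multiset (Fin m)).toFinset = S).card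
        = (k - 1).choose (k - m / 2) := by
    intro S hS
    rw [← hS]
    exact Sym.card_filter_toFinset_eq k S (by omega)
  have htotal : (Finset.univ.filter
        (fun s : Sym (Fin m) k => (s : Multiset (Fin m)).toFinset.card = m / 2)).card
      = m.choose (m / 2) * (k - 1).choose (k - m / 2) := by
    rw [Finset.card_eq_sum_card_fiberwise
      (f := fun s : Sym (Fin m) k => (s : Multiset (Fin m)).toFinset)
      (t := Finset.powersetCard (m / 2) Finset.univ) (fun s hs => by simpa using hs),
      Finset.sum_const_nat (m := (k - 1).choose (k - m / 2)), Finset.card_powersetCard,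
      Finset.card_univ, Fintype.card_fin]
    intro S hS
    have hS' : S.card = m / 2 := (Finset.mem_powersetCard.1 hS).2
    rw [← hfib S hS', Finset.filter_filter]
    congr 1
    ext s
    simp only [Finset.mem_filter_univ]
    exact ⟨And.right, fun h => ⟨by rw [h, hS'], h⟩⟩
  refine ⟨?_, htotal⟩
  rw [htotal]
  set B := A ∩ Finset.univ.filter
    (fun s : Sym (Fin m) k => (s : Multiset (Fin m)).toFinset.card = m / 2)
  set F := B.image (fun s : Sym (Fin m) k => (s : Multiset (Fin m)).toFinset)
  have hF : ∀ S ∈ F, S.card = m / 2 := by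
    intro S hS
    obtain ⟨s, hs, rfl⟩ := Finset.mem_image.1 hS
    exact (Finset.mem_filter.1 (Finset.mem_inter.1 hs).2).2
  have hBF : B.card ≤ (k - 1).choose (k - m / 2) * F.card := by
    refine Finset.card_le_mul_card_image B _ fun S hS => ?_
    rw [← hfib S (hF S hS)]
    exact Finset.card_le_card (Finset.filter_subset_filter _ (Finset.subset_univ _))
  have hFint : ∀ S ∈ F, ∀ T ∈ F, (S ∩ T).Nonempty := by
    intro S hS T hT
    obtain ⟨s, hs, rfl⟩ := Finset.mem_image.1 hS
    obtain ⟨t, ht, rfl⟩ := Finset.mem_image.1 hT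
    obtain ⟨x, hxs, hxt⟩ := hint s (Finset.mem_inter.1 hs).1 t (Finset.mem_inter.1 ht).1
    exact ⟨x, Finset.mem_inter.2 ⟨Multiset.mem_toFinset.2 hxs, Multiset.mem_toFinset.2 hxt⟩⟩
  have hFcard := Finset.two_mul_card_le_choose_of_intersecting
    (by rw [Fintype.card_fin]; exact hhalf) F hF hFint
  rw [Fintype.card_fin] at hFcard
  calc 2 * B.card ≤ 2 * ((k - 1).choose (k - m / 2) * F.card) := Nat.mul_le_mul_left 2 hBF
    _ = 2 * F.card * (k - 1).choose (k - m / 2) := by ring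
    _ ≤ _ := Nat.mul_le_mul_right _ hFcard
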